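/- Define a(m) to be the number of length-m strings of elements of ℤ/2ℤ that occur as m consecutive coefficients of (1+X)^k in (ZMod 2)[X] for some k ≥ 0 (where coefficients beyond the degree are 0). Then a(m) = m² − m + 2 for all m ≥ 1. -/

import Mathlib

open Polynomial

/-- A block `b` of length `m` is accessible for `1+X` mod 2 if it occurs as
`m` consecutive coefficients of some power of `1+X` in `(ZMod 2)[X]`. -/
def Accessible {m : ℕ} (b : Fin m → ZMod 2) : Prop :=
  ∃ k j : ℕ, ∀ i : Fin m, ((1 + X : Polynomial (ZMod 2)) ^ k).coeff (j + i) = b i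

namespace AccBlocks

/-- coefficient of `(1+X)^k`. -/
noncomputable def cf (k i : ℕ) : ZMod 2 := ((1 + X : Polynomial (ZMod 2)) ^ k).coeff i

lemma sq_eq (k : ℕ) : (1 + X : Polynomial (ZMod 2)) ^ (2 * k)
    = expand (ZMod 2) 2 ((1 + X : Polynomial (ZMod 2)) ^ k) := by
  have h : Fact (Nat.Prime 2) := ⟨Nat.prime_two⟩
  rw [ZMod.expand_card, ← pow_mul, mul_comm]

lemma cf_ee (k i : ℕ) : cf (2 * k) (2 * i) = cf k i := by
  unfold cf
  rw [sq_eq, coeff_expand (by norm_num)]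
  simp

lemma cf_eo (k i : ℕ) : cf (2 * k) (2 * i + 1) = 0 := by
  unfold cf
  rw [sq_eq, coeff_expand (by norm_num), if_neg (by omega)]

lemma cf_succ_succ (k i : ℕ) : cf (k + 1) (i + 1) = cf k (i + 1) + cf k i := by
  unfold cf
  rw [pow_succ, mul_add, mul_one, coeff_add, coeff_mul_X]

lemma cf_zero (k : ℕ) : cf k 0 = 1 := by
  unfold cf
  simp [coeff_zero_eq_eval_zero]

lemma cf_oo (k i : ℕ) : cf (2 * k + 1) (2 * i + 1) = cf k i := by
  rw [cf_succ_succ, cf_eo, cf_ee, zero_add]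

lemma cf_oe (k i : ℕ) : cf (2 * k + 1) (2 * i) = cf k i := by
  rcases i with _ | i
  · simp [cf_zero]
  · rw [show 2 * (i + 1) = (2 * i + 1) + 1 by ring, cf_succ_succ, cf_eo, add_zero,
      show 2 * i + 1 + 1 = 2 * (i + 1) by ring, cf_ee]

lemma cf_big (k i : ℕ) (h : k < i) : cf k i = 0 := by
  unfold cf
  apply coeff_eq_zero_of_natDegree_lt
  refine lt_of_le_of_lt (natDegree_pow_le) ?_
  have : (1 + X : Polynomial (ZMod 2)).natDegree ≤ 1 := by
    rw [add_comm]; exact (natDegree_X_add_C (1 : ZMod 2)).le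
  nlinarith

lemma cf_shift (k r j : ℕ) (h : k < 2 ^ r) : cf (k + 2 ^ r) (j + 2 ^ r) = cf k j := by
  have hf : Fact (Nat.Prime 2) := ⟨Nat.prime_two⟩
  have : cf k (j + 2 ^ r) = 0 := cf_big _ _ (by omega)
  unfold cf at *
  rw [pow_add, add_pow_char_pow, one_pow, mul_add, mul_one, coeff_add, coeff_mul_X_pow, this,
    zero_add]

lemma cf_shift_low (k r j : ℕ) (h : j < 2 ^ r) : cf (k + 2 ^ r) j = cf k j := by
  have hf : Fact (Nat.Prime 2) := ⟨Nat.prime_two⟩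
  unfold cf at *
  rw [pow_add, add_pow_char_pow, one_pow, mul_add, mul_one, coeff_add, coeff_mul_X_pow',
    if_neg (by omega), add_zero]

lemma cf_ones (r : ℕ) : ∀ i < 2 ^ r, cf (2 ^ r - 1) i = 1 := by
  induction r with
  | zero => intro i hi; obtain rfl : i = 0 := by simpa using hi
            exact cf_zero _
  | succ r ih =>
    intro i hi
    have hp : 0 < 2 ^ r := by positivity
    rw [pow_succ] at *
    rw [show 2 ^ r * 2 - 1 = 2 * (2 ^ r - 1) + 1 by omega]
    rcases Nat.even_or_odd' i with ⟨t, rfl | rfl⟩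
    · rw [cf_oe]; exact ih _ (by omega)
    · rw [cf_oo]; exact ih _ (by omega)

lemma zmod_cases (x : ZMod 2) : x = 0 ∨ x = 1 := by
  revert x; decide

/-- the set of accessible blocks -/
def A (m : ℕ) : Set (Fin m → ZMod 2) := {b | Accessible b}

lemma mem_A {m : ℕ} {b : Fin m → ZMod 2} :
    b ∈ A m ↔ ∃ k j : ℕ, ∀ i : Fin m, b i = cf k (j + i) := by
  constructor
  · rintro ⟨k, j, h⟩; exact ⟨k, j, fun i => (h i).symm⟩
  · rintro ⟨k, j, h⟩; exact ⟨k, j, fun i => (h i).symm⟩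

lemma mem_A_pos {m : ℕ} {b : Fin m → ZMod 2} (hb : b ∈ A m) :
    ∃ k j : ℕ, ∀ i : Fin m, b i = cf k (j + 1 + i) := by
  obtain ⟨k, j, h⟩ := mem_A.1 hb
  have hk : k < 2 ^ k := Nat.lt_two_pow_self
  refine ⟨k + 2 ^ k, j + (2 ^ k - 1), fun i => ?_⟩
  rw [h i, show j + (2 ^ k - 1) + 1 + (i : ℕ) = (j + i) + 2 ^ k by omega, cf_shift _ _ _ hk]

lemma zero_mem (m : ℕ) : (0 : Fin m → ZMod 2) ∈ A m :=
  mem_A.2 ⟨0, 1, fun i => by rw [cf_big _ _ (by omega)]; rfl⟩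

lemma one_mem (m : ℕ) : (1 : Fin m → ZMod 2) ∈ A m :=
  mem_A.2 ⟨2 ^ m - 1, 0, fun i => by
    have : m < 2 ^ m := Nat.lt_two_pow_self
    rw [cf_ones _ _ (by omega)]; rfl⟩

/-- indicator block -/
def sg (m p : ℕ) : Fin m → ZMod 2 := fun i => if (i : ℕ) = p then 1 else 0

lemma first_mem (m : ℕ) : sg m 0 ∈ A m :=
  mem_A.2 ⟨0, 0, fun i => by
    unfold sg
    split_ifs with h
    · rw [h, cf_zero]
    · rw [cf_big _ _ (by omega)]⟩

lemma last_mem (m : ℕ) : sg m (m - 1) ∈ A m := by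
  have h2 : m < 2 ^ m := Nat.lt_two_pow_self
  refine mem_A.2 ⟨0 + 2 ^ m, 2 ^ m - (m - 1), fun i => ?_⟩
  unfold sg
  split_ifs with h
  · rw [h, show 2 ^ m - (m - 1) + (m - 1) = 0 + 2 ^ m by omega, cf_shift _ _ _ (by omega), cf_zero]
  · rw [cf_shift_low _ _ _ (by omega), cf_big _ _ (by omega)]

def e0 (m : ℕ) (f : Fin ((m + 1) / 2) → ZMod 2) : Fin m → ZMod 2 :=
  fun i => if (i : ℕ) % 2 = 0 then f ⟨i / 2, by omega⟩ else 0
def e1 (m : ℕ) (f : Fin (m / 2) → ZMod 2) : Fin m → ZMod 2 :=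
  fun i => if h : (i : ℕ) % 2 = 1 then f ⟨i / 2, by omega⟩ else 0
def o0 (m : ℕ) (f : Fin ((m + 1) / 2) → ZMod 2) : Fin m → ZMod 2 :=
  fun i => f ⟨i / 2, by omega⟩
def o1 (m : ℕ) (f : Fin (m / 2 + 1) → ZMod 2) : Fin m → ZMod 2 :=
  fun i => f ⟨(i + 1) / 2, by omega⟩

lemma e0_inj (m : ℕ) : Function.Injective (e0 m) := by
  intro f g h
  funext i
  have := congrFun h ⟨2 * i, by omega⟩
  simpa [e0] using this

lemma e1_inj (m : ℕ) : Function.Injective (e1 m) := by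
  intro f g h
  funext i
  have := congrFun h ⟨2 * i + 1, by omega⟩
  have e : (2 * (i : ℕ) + 1) / 2 = i := by omega
  simpa [e1, e, Nat.add_mod] using this

lemma o0_inj (m : ℕ) : Function.Injective (o0 m) := by
  intro f g h
  funext i
  have := congrFun h ⟨2 * i, by omega⟩
  simpa [o0] using this

lemma o1_inj (m : ℕ) (hm : 1 ≤ m) : Function.Injective (o1 m) := by
  intro f g h
  funext i
  have := congrFun h ⟨2 * i - 1, by omega⟩
  have e : (2 * (i : ℕ) - 1 + 1) / 2 = i := by omega
  simpa [o1, e] using this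

lemma A_eq (m : ℕ) : A m = (Set.image (e0 m) (A _) ∪ Set.image (e1 m) (A _)) ∪ (Set.image (o0 m) (A _) ∪ Set.image (o1 m) (A _)) := by
  ext b
  constructor
  · intro hb
    obtain ⟨k, j, h⟩ := mem_A.1 hb
    rcases Nat.even_or_odd' k with ⟨k, rfl | rfl⟩ <;> rcases Nat.even_or_odd' j with ⟨j, rfl | rfl⟩
    · refine Or.inl (Or.inl ⟨fun i => cf k (j + i), mem_A.2 ⟨k, j, fun i => rfl⟩, ?_⟩)
      funext i
      rw [h i]
      simp only [e0]
      split_ifs with hi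
      · rw [← cf_ee]; congr 1; omega
      · rw [show 2 * j + (i : ℕ) = 2 * (j + i / 2) + 1 by omega, cf_eo]
    · refine Or.inl (Or.inr ⟨fun i => cf k (j + 1 + i), mem_A.2 ⟨k, j + 1, fun i => rfl⟩, ?_⟩)
      funext i
      rw [h i]
      simp only [e1]
      split_ifs with hi
      · rw [← cf_ee]; congr 1; omega
      · rw [show 2 * j + 1 + (i : ℕ) = 2 * (j + i / 2) + 1 by omega, cf_eo]
    · refine Or.inr (Or.inl ⟨fun i => cf k (j + i), mem_A.2 ⟨k, j, fun i => rfl⟩, ?_⟩)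
      funext i
      rw [h i]
      simp only [o0]
      rcases Nat.mod_two_eq_zero_or_one i with hi | hi
      · rw [← cf_oe]; congr 1; omega
      · rw [← cf_oo]; congr 1; omega
    · refine Or.inr (Or.inr ⟨fun i => cf k (j + i), mem_A.2 ⟨k, j, fun i => rfl⟩, ?_⟩)
      funext i
      rw [h i]
      simp only [o1]
      rcases Nat.mod_two_eq_zero_or_one i with hi | hi
      · rw [← cf_oo]; congr 1; omega
      · rw [← cf_oe]; congr 1; omega
  · rintro ((⟨f, hf, rfl⟩ | ⟨f, hf, rfl⟩) | (⟨f, hf, rfl⟩ | ⟨f, hf, rfl⟩))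
    · obtain ⟨k, j, h⟩ := mem_A.1 hf
      refine mem_A.2 ⟨2 * k, 2 * j, fun i => ?_⟩
      simp only [e0]
      split_ifs with hi
      · rw [h, ← cf_ee]; congr 1; simp only; omega
      · rw [show 2 * j + (i : ℕ) = 2 * (j + i / 2) + 1 by omega, cf_eo]
    · obtain ⟨k, j, h⟩ := mem_A_pos hf
      refine mem_A.2 ⟨2 * k, 2 * j + 1, fun i => ?_⟩
      simp only [e1]
      split_ifs with hi
      · rw [h, ← cf_ee]; congr 1; simp only; omega
      · rw [show 2 * j + 1 + (i : ℕ) = 2 * (j + i / 2) + 1 by omega, cf_eo]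
    · obtain ⟨k, j, h⟩ := mem_A.1 hf
      refine mem_A.2 ⟨2 * k + 1, 2 * j, fun i => ?_⟩
      simp only [o0]
      rw [h]
      rcases Nat.mod_two_eq_zero_or_one i with hi | hi
      · rw [← cf_oe]; congr 1; simp only; omega
      · rw [← cf_oo]; congr 1; simp only; omega
    · obtain ⟨k, j, h⟩ := mem_A.1 hf
      refine mem_A.2 ⟨2 * k + 1, 2 * j + 1, fun i => ?_⟩
      simp only [o1]
      rw [h]
      rcases Nat.mod_two_eq_zero_or_one i with hi | hi
      · rw [← cf_oo]; congr 1; simp only; omega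
      · rw [← cf_oe]; congr 1; simp only; omega

lemma E_inter (m : ℕ) : Set.image (e0 m) (A _) ∩ Set.image (e1 m) (A _) = {0} := by
  ext b
  simp only [Set.mem_singleton_iff]
  constructor
  · rintro ⟨⟨f, hf, rfl⟩, ⟨g, hg, h⟩⟩
    funext i
    rcases Nat.mod_two_eq_zero_or_one i with hi | hi
    · rw [← h]; simp [e1, hi]
    · simp [e0, hi]
  · rintro rfl
    exact ⟨⟨0, zero_mem _, by funext i; simp [e0]⟩, ⟨0, zero_mem _, by funext i; simp [e1]⟩⟩

lemma O_inter (m : ℕ) (hm : 1 ≤ m) : Set.image (o0 m) (A _) ∩ Set.image (o1 m) (A _) = {0, 1} := by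
  ext b
  simp only [Set.mem_insert_iff, Set.mem_singleton_iff]
  constructor
  · rintro ⟨⟨f, hf, hb⟩, ⟨g, hg, h⟩⟩
    have key : ∀ i (hi : i < m), b ⟨i, hi⟩ = b ⟨0, hm⟩ := by
      intro i
      induction i with
      | zero => intro hi; rfl
      | succ i ih =>
        intro hi
        rw [← ih (by omega)]
        rcases Nat.mod_two_eq_zero_or_one i with h2 | h2
        · rw [← hb]; simp only [o0]; congr 2; omega
        · rw [← h]; simp only [o1]; congr 2; omega
    rcases zmod_cases (b ⟨0, hm⟩) with h0 | h0
    · left; funext i; rw [key i i.2, h0]; rfl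
    · right; funext i; rw [key i i.2, h0]; rfl
  · rintro (rfl | rfl)
    · exact ⟨⟨0, zero_mem _, by funext i; simp [o0]⟩, ⟨0, zero_mem _, by funext i; simp [o1]⟩⟩
    · exact ⟨⟨1, one_mem _, by funext i; simp [o0]⟩, ⟨1, one_mem _, by funext i; simp [o1]⟩⟩

lemma supp_cases {m p : ℕ} (hp : p < m) (b : Fin m → ZMod 2)
    (h : ∀ i : Fin m, (i : ℕ) ≠ p → b i = 0) : b = 0 ∨ b = sg m p := by
  rcases zmod_cases (b ⟨p, hp⟩) with h0 | h0
  · left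
    funext i
    by_cases hi : (i : ℕ) = p
    · subst hi; exact h0
    · exact h i hi
  · right
    funext i
    unfold sg
    split_ifs with hi
    · subst hi; exact h0
    · exact h i hi

lemma EO_inter (m : ℕ) (hm : 2 ≤ m) :
    (Set.image (e0 m) (A _) ∪ Set.image (e1 m) (A _)) ∩ (Set.image (o0 m) (A _) ∪ Set.image (o1 m) (A _)) = {0, sg m 0, sg m (m - 1)} := by
  ext b
  simp only [Set.mem_insert_iff, Set.mem_singleton_iff]
  constructor
  · have hE0 : b ∈ Set.image (e0 m) (A _) → ∀ i (hi : i < m), i % 2 = 1 → b ⟨i, hi⟩ = 0 := by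
      rintro ⟨f, hf, rfl⟩ i hi h2
      simp [e0, h2]
    have hE1 : b ∈ Set.image (e1 m) (A _) → ∀ i (hi : i < m), i % 2 = 0 → b ⟨i, hi⟩ = 0 := by
      rintro ⟨f, hf, rfl⟩ i hi h2
      simp [e1, h2]
    have hO0 : b ∈ Set.image (o0 m) (A _) → ∀ i (hi : i + 1 < m), i % 2 = 0 →
        b ⟨i, by omega⟩ = b ⟨i + 1, hi⟩ := by
      rintro ⟨f, hf, rfl⟩ i hi h2
      simp only [o0]; congr 2; omega
    have hO1 : b ∈ Set.image (o1 m) (A _) → ∀ i (hi : i + 1 < m), i % 2 = 1 →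
        b ⟨i, by omega⟩ = b ⟨i + 1, hi⟩ := by
      rintro ⟨f, hf, rfl⟩ i hi h2
      simp only [o1]; congr 2; omega
    rintro ⟨hE | hE, hO | hO⟩
    · have := supp_cases (p := m - 1) (by omega) b (by
        rintro ⟨i, hi⟩ hne
        simp only at hne
        rcases Nat.mod_two_eq_zero_or_one i with h2 | h2
        · rw [hO0 hO i (by omega) h2]; exact hE0 hE _ _ (by omega)
        · exact hE0 hE _ _ h2)
      tauto
    · have := supp_cases (p := 0) (by omega) b (by
        rintro ⟨i, hi⟩ hne
        simp only at hne
        rcases Nat.mod_two_eq_zero_or_one i with h2 | h2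
        · obtain ⟨i, rfl⟩ := Nat.exists_eq_succ_of_ne_zero hne
          rw [← hO1 hO i hi (by omega)]; exact hE0 hE _ _ (by omega)
        · exact hE0 hE _ _ h2)
      tauto
    · left
      funext ⟨i, hi⟩
      rcases Nat.mod_two_eq_zero_or_one i with h2 | h2
      · exact hE1 hE _ _ h2
      · obtain ⟨i, rfl⟩ := Nat.exists_eq_succ_of_ne_zero (n := i) (by omega)
        rw [← hO0 hO i hi (by omega)]; exact hE1 hE _ _ (by omega)
    · have := supp_cases (p := m - 1) (by omega) b (by
        rintro ⟨i, hi⟩ hne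
        simp only at hne
        rcases Nat.mod_two_eq_zero_or_one i with h2 | h2
        · exact hE1 hE _ _ h2
        · rw [hO1 hO i (by omega) h2]; exact hE1 hE _ _ (by omega))
      tauto
  · rintro (rfl | rfl | rfl)
    · exact ⟨Or.inl ⟨0, zero_mem _, by funext i; simp [e0]⟩,
        Or.inl ⟨0, zero_mem _, by funext i; simp [o0]⟩⟩
    · refine ⟨Or.inl ⟨_, first_mem _, ?_⟩, Or.inr ⟨_, first_mem _, ?_⟩⟩
      · funext i; simp only [e0, sg]; split_ifs <;> first | rfl | omega
      · funext i; simp only [o1, sg]; split_ifs <;> first | rfl | omega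
    · rcases Nat.mod_two_eq_zero_or_one m with h2 | h2
      · refine ⟨Or.inr ⟨_, last_mem _, ?_⟩, Or.inr ⟨_, last_mem _, ?_⟩⟩
        · funext i; simp only [e1, sg]; split_ifs <;> first | rfl | omega
        · funext i; simp only [o1, sg]; split_ifs <;> first | rfl | omega
      · refine ⟨Or.inl ⟨_, last_mem _, ?_⟩, Or.inl ⟨_, last_mem _, ?_⟩⟩
        · funext i; simp only [e0, sg]; split_ifs <;> first | rfl | omega
        · funext i; simp only [o0, sg]; split_ifs <;> first | rfl | omega

lemma rec_A (m : ℕ) (hm : 2 ≤ m) :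
    (A m).ncard + 6 = 2 * (A ((m + 1) / 2)).ncard + (A (m / 2)).ncard + (A (m / 2 + 1)).ncard := by
  have h1 := Set.ncard_union_add_ncard_inter (Set.image (e0 m) (A _)) (Set.image (e1 m) (A _))
  have h2 := Set.ncard_union_add_ncard_inter (Set.image (o0 m) (A _)) (Set.image (o1 m) (A _))
  have h3 := Set.ncard_union_add_ncard_inter (Set.image (e0 m) (A _) ∪ Set.image (e1 m) (A _)) (Set.image (o0 m) (A _) ∪ Set.image (o1 m) (A _))
  rw [← A_eq, EO_inter m hm] at h3
  rw [E_inter, Set.ncard_singleton] at h1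
  have n01 : (0 : Fin m → ZMod 2) ≠ 1 := by
    intro h; have := congrFun h ⟨0, by omega⟩; simp at this
  rw [O_inter m (by omega), Set.ncard_pair n01] at h2
  have n1 : (0 : Fin m → ZMod 2) ≠ sg m 0 := by
    intro h; have := congrFun h ⟨0, by omega⟩; simp [sg] at this
  have n2 : (0 : Fin m → ZMod 2) ≠ sg m (m - 1) := by
    intro h; have := congrFun h ⟨m - 1, by omega⟩; simp [sg] at this
  have n3 : sg m 0 ≠ sg m (m - 1) := by
    intro h
    have := congrFun h ⟨0, by omega⟩
    simp only [sg] at this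
    rw [if_pos trivial, if_neg (by omega)] at this
    exact one_ne_zero this
  rw [Set.ncard_eq_three.2 ⟨_, _, _, n1, n2, n3, rfl⟩] at h3
  rw [Set.ncard_image_of_injective _ (e0_inj m), Set.ncard_image_of_injective _ (e1_inj m)] at h1
  rw [Set.ncard_image_of_injective _ (o0_inj m),
    Set.ncard_image_of_injective _ (o1_inj m (by omega))] at h2
  omega

lemma A_one : A 1 = Set.univ := by
  ext b
  simp only [Set.mem_univ, iff_true]
  rcases supp_cases (p := 0) (by omega) b (fun i hi => absurd i.2 (by omega)) with rfl | rfl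
  · exact zero_mem _
  · exact first_mem _

lemma A_two : A 2 = Set.univ := by
  ext b
  simp only [Set.mem_univ, iff_true]
  have : b = 0 ∨ b = 1 ∨ b = sg 2 0 ∨ b = sg 2 1 := by
    revert b; unfold sg; decide
  rcases this with rfl | rfl | rfl | rfl
  · exact zero_mem _
  · exact one_mem _
  · exact first_mem _
  · exact last_mem 2

lemma card_A (m : ℕ) (hm : 1 ≤ m) : (A m).ncard + m = m ^ 2 + 2 := by
  induction m using Nat.strong_induction_on with
  | _ m ih =>
    by_cases h1 : m = 1
    · subst h1; rw [A_one, Set.ncard_univ]; simp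
    by_cases h2 : m = 2
    · subst h2; rw [A_two, Set.ncard_univ]; simp
    have hr := rec_A m (by omega)
    have ha := ih ((m + 1) / 2) (by omega) (by omega)
    have hb := ih (m / 2) (by omega) (by omega)
    have hc := ih (m / 2 + 1) (by omega) (by omega)
    rcases Nat.even_or_odd' m with ⟨n, rfl | rfl⟩
    · rw [show (2 * n + 1) / 2 = n by omega] at *
      rw [show 2 * n / 2 = n by omega] at *
      nlinarith
    · rw [show (2 * n + 1 + 1) / 2 = n + 1 by omega] at *
      rw [show (2 * n + 1) / 2 = n by omega] at *
      nlinarith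

end AccBlocks

theorem count_accessible_blocks (m : ℕ) (hm : 1 ≤ m) :
    {b : Fin m → ZMod 2 | Accessible b}.ncard = m ^ 2 - m + 2 := by
  have h := AccBlocks.card_A m hm
  have h2 : m ≤ m ^ 2 := by nlinarith
  unfold AccBlocks.A at h
  omega
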